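/- Let G be a digraph and let X,Y ⊆ V(G) be such that no arc of G has its head in X∖Y and no arc of G has its tail in Y∖X, let G' be the associated auxiliary undirected graph, and let k, r be nonnegative integers. Then G contains k pairwise vertex-disjoint nontrivial directed paths from X to Y together with a set R ⊆ X∩Y with |R| = r such that no vertex of R lies on any of these paths, if and only if G' has a matching M of size k + |V(G)∖(X∪Y)| that leaves at least r vertices of X∩Y unsaturated. -/

import Mathlib

/-- `p` is a directed path: a nonempty list of pairwise distinct vertices in which
consecutive vertices are joined by arcs of the digraph with arc relation `A`. -/
def IsPath {V : Type*} (A : V → V → Prop) (p : List V) : Prop :=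
  p ≠ [] ∧ p.Nodup ∧ p.Chain' A

/-- `p` is a directed `(u,v)`-path. -/
def IsPathFT {V : Type*} (A : V → V → Prop) (u v : V) (p : List V) : Prop :=
  IsPath A p ∧ p.head? = some u ∧ p.getLast? = some v

/-- Base (oriented) relation of the auxiliary undirected graph `G'` associated with the
digraph `A` and the sets `X, Y`.  Vertices: `Sum.inl v` is the original vertex `v`, and
`Sum.inr v` is the copy `v'` of `v` (used only for `v ∉ X ∪ Y`).
Edges: `{v, v'}` for every `v ∉ X ∪ Y`; for every arc `(u,v)`, the edge `{u, v}` if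
`v ∈ X ∪ Y` and the edge `{u, v'}` otherwise. -/
def auxRel {V : Type*} [DecidableEq V] (A : V → V → Prop) (X Y : Finset V) :
    V ⊕ V → V ⊕ V → Prop
  | .inl u, .inl w => A u w ∧ w ∈ X ∪ Y
  | .inl u, .inr w => (A u w ∧ w ∉ X ∪ Y) ∨ (u = w ∧ u ∉ X ∪ Y)
  | .inr _, _ => False

/-- Adjacency (symmetrized) in the auxiliary undirected graph `G'`. -/
def auxAdj {V : Type*} [DecidableEq V] (A : V → V → Prop) (X Y : Finset V)
    (a b : V ⊕ V) : Prop :=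
  auxRel A X Y a b ∨ auxRel A X Y b a

/-- `M` is a matching of the undirected graph with adjacency `Adj`: a set of edges
(each recorded once, as an ordered pair of distinct adjacent vertices) that are
pairwise disjoint. -/
def IsMatching {W : Type*} (Adj : W → W → Prop) (M : Finset (W × W)) : Prop :=
  (∀ e ∈ M, Adj e.1 e.2 ∧ e.1 ≠ e.2) ∧
  ∀ e ∈ M, ∀ f ∈ M, e ≠ f →
    e.1 ≠ f.1 ∧ e.1 ≠ f.2 ∧ e.2 ≠ f.1 ∧ e.2 ≠ f.2

/-- `w` is saturated by the matching `M`. -/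
def SaturatedBy {W : Type*} (M : Finset (W × W)) (w : W) : Prop :=
  ∃ e ∈ M, w = e.1 ∨ w = e.2

/-- Normalised (oriented) form of the matching. -/
def NormM {V : Type*} [DecidableEq V] (A : V → V → Prop) (X Y : Finset V) (U : Finset V)
    (T : Finset (V × V)) : Prop :=
  (∀ e ∈ T, A e.1 e.2 ∨ (e.1 = e.2 ∧ e.1 ∉ X ∪ Y)) ∧
  (∀ e ∈ T, ∀ f ∈ T, e.1 = f.1 → e = f) ∧
  (∀ e ∈ T, ∀ f ∈ T, e.2 = f.2 → e = f) ∧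
  (∀ e ∈ T, ∀ f ∈ T, e.1 = f.2 → e.1 ∉ X ∪ Y) ∧
  (∀ v ∈ U, ∀ e ∈ T, e.1 ≠ v ∧ e.2 ≠ v)

/-- The in-copy of a vertex. -/
def cpy {V : Type*} [DecidableEq V] (X Y : Finset V) (v : V) : V ⊕ V :=
  if v ∈ X ∪ Y then Sum.inl v else Sum.inr v

lemma cpy_inj {V : Type*} [DecidableEq V] (X Y : Finset V) {v w : V}
    (h : cpy X Y v = cpy X Y w) : v = w := by
  unfold cpy at h
  split_ifs at h <;> simp_all

lemma inl_eq_cpy {V : Type*} [DecidableEq V] (X Y : Finset V) {v w : V}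
    (h : Sum.inl v = cpy X Y w) : v = w ∧ w ∈ X ∪ Y := by
  unfold cpy at h
  split_ifs at h <;> simp_all

lemma auxRel_iff {V : Type*} [DecidableEq V] (A : V → V → Prop) (X Y : Finset V)
    (a b : V ⊕ V) : auxRel A X Y a b ↔
      ∃ u v, a = Sum.inl u ∧ b = cpy X Y v ∧ (A u v ∨ (u = v ∧ u ∉ X ∪ Y)) := by
  constructor
  · intro h
    rcases a with u | u <;> rcases b with w | w
    · obtain ⟨h1, h2⟩ := h
      exact ⟨u, w, rfl, by rw [cpy, if_pos h2], Or.inl h1⟩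
    · refine ⟨u, w, rfl, ?_, ?_⟩
      · have : w ∉ X ∪ Y := by
          rcases h with h | ⟨h, h'⟩
          · exact h.2
          · exact h ▸ h'
        simp only [cpy, if_neg this]
      · rcases h with h | h
        · exact Or.inl h.1
        · exact Or.inr h
    · exact h.elim
    · exact h.elim
  · rintro ⟨u, v, rfl, rfl, h⟩
    unfold cpy
    split_ifs with hv
    · rcases h with h | ⟨h, h'⟩
      · exact ⟨h, hv⟩
      · exact (h' (h ▸ hv)).elim
    · rcases h with h | ⟨h, h'⟩
      · exact Or.inl ⟨h, hv⟩
      · exact Or.inr ⟨h, h'⟩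

lemma norm_of_matching {V : Type*} [Fintype V] [DecidableEq V]
    (A : V → V → Prop) (harc : ∀ a b, A a b → a ≠ b) (X Y U : Finset V) (hU : U ⊆ X ∩ Y)
    (M : Finset ((V ⊕ V) × (V ⊕ V))) (hM : IsMatching (auxAdj A X Y) M)
    (hs : ∀ v ∈ U, ¬ SaturatedBy M (Sum.inl v)) :
    ∃ T, NormM A X Y U T ∧ T.card = M.card := by
  classical
  obtain ⟨hM1, hM2⟩ := hM
  have key : ∀ e : {e // e ∈ M}, ∃ p : V × V,
      ((e.1.1 = Sum.inl p.1 ∧ e.1.2 = cpy X Y p.2) ∨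
        (e.1.2 = Sum.inl p.1 ∧ e.1.1 = cpy X Y p.2)) ∧
      (A p.1 p.2 ∨ (p.1 = p.2 ∧ p.1 ∉ X ∪ Y)) := by
    rintro ⟨e, he⟩
    rcases (hM1 e he).1 with h | h <;> obtain ⟨u, v, h1, h2, h3⟩ := (auxRel_iff _ _ _ _ _).1 h
    · exact ⟨(u, v), Or.inl ⟨h1, h2⟩, h3⟩
    · exact ⟨(u, v), Or.inr ⟨h1, h2⟩, h3⟩
  choose g hg hA using key
  have h11 : ∀ e f, (g e).1 = (g f).1 → e = f := by
    rintro ⟨e, he⟩ ⟨f, hf⟩ h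
    by_contra hne
    have h4 := hM2 e he f hf (by simpa using hne)
    have h1 := hg ⟨e, he⟩
    have h2 := hg ⟨f, hf⟩
    rw [h] at h1
    grind
  have h22 : ∀ e f, (g e).2 = (g f).2 → e = f := by
    rintro ⟨e, he⟩ ⟨f, hf⟩ h
    by_contra hne
    have h4 := hM2 e he f hf (by simpa using hne)
    have h1 := hg ⟨e, he⟩
    have h2 := hg ⟨f, hf⟩
    rw [h] at h1
    grind
  have h12 : ∀ e f, (g e).1 = (g f).2 → (g e).1 ∉ X ∪ Y := by
    rintro ⟨e, he⟩ ⟨f, hf⟩ h hmem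
    by_cases hne : e = f
    · subst hne
      rcases hA ⟨e, he⟩ with h5 | h5
      · exact harc _ _ h5 h
      · exact h5.2 hmem
    have h4 := hM2 e he f hf hne
    have h1 := hg ⟨e, he⟩
    have h2 := hg ⟨f, hf⟩
    have hc : cpy X Y (g ⟨f, hf⟩).2 = Sum.inl (g ⟨e, he⟩).1 := by
      rw [← h, cpy, if_pos hmem]
    rw [hc] at h2
    grind
  refine ⟨M.attach.image g, ⟨?_, ?_, ?_, ?_, ?_⟩, ?_⟩
  · intro e he
    obtain ⟨a, -, rfl⟩ := Finset.mem_image.1 he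
    exact hA a
  · intro e he f hf h
    obtain ⟨a, -, rfl⟩ := Finset.mem_image.1 he
    obtain ⟨b, -, rfl⟩ := Finset.mem_image.1 hf
    rw [h11 a b h]
  · intro e he f hf h
    obtain ⟨a, -, rfl⟩ := Finset.mem_image.1 he
    obtain ⟨b, -, rfl⟩ := Finset.mem_image.1 hf
    rw [h22 a b h]
  · intro e he f hf h
    obtain ⟨a, -, rfl⟩ := Finset.mem_image.1 he
    obtain ⟨b, -, rfl⟩ := Finset.mem_image.1 hf
    exact h12 a b h
  · intro v hv e he
    obtain ⟨a, -, rfl⟩ := Finset.mem_image.1 he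
    have hsv := hs v hv
    have hmem : v ∈ X ∪ Y := by
      have := hU hv
      simp only [Finset.mem_inter, Finset.mem_union] at *
      exact Or.inl this.1
    have h1 := hg a
    constructor
    · intro h
      rw [h] at h1
      refine hsv ⟨a.1, a.2, ?_⟩
      rcases h1 with h1 | h1
      · exact Or.inl h1.1.symm
      · exact Or.inr h1.1.symm
    · intro h
      rw [h, cpy, if_pos hmem] at h1
      refine hsv ⟨a.1, a.2, ?_⟩
      rcases h1 with h1 | h1
      · exact Or.inr h1.2.symm
      · exact Or.inl h1.2.symm
  · rw [Finset.card_image_of_injective, Finset.card_attach]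
    intro a b h
    exact h11 a b (by rw [h])

lemma matching_of_norm {V : Type*} [Fintype V] [DecidableEq V]
    (A : V → V → Prop) (harc : ∀ a b, A a b → a ≠ b) (X Y U : Finset V)
    (T : Finset (V × V)) (hT : NormM A X Y U T) :
    ∃ M, IsMatching (auxAdj A X Y) M ∧ M.card = T.card ∧
      ∀ v ∈ U, ¬ SaturatedBy M (Sum.inl v) := by
  classical
  obtain ⟨hA, h11, h22, h12, hU⟩ := hT
  refine ⟨T.image (fun e => (Sum.inl e.1, cpy X Y e.2)), ⟨?_, ?_⟩, ?_, ?_⟩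
  · intro e he
    obtain ⟨a, ha, rfl⟩ := Finset.mem_image.1 he
    refine ⟨Or.inl ((auxRel_iff _ _ _ _ _).2 ⟨_, _, rfl, rfl, hA a ha⟩), ?_⟩
    intro h
    obtain ⟨h1, h2⟩ := inl_eq_cpy X Y h
    exact h12 a ha a ha h1 (h1 ▸ h2)
  · intro e he f hf hne
    obtain ⟨a, ha, rfl⟩ := Finset.mem_image.1 he
    obtain ⟨b, hb, rfl⟩ := Finset.mem_image.1 hf
    have hab : a ≠ b := by rintro rfl; exact hne rfl
    refine ⟨?_, ?_, ?_, ?_⟩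
    · intro h
      exact hab (h11 a ha b hb (Sum.inl_injective h))
    · intro h
      obtain ⟨h1, h2⟩ := inl_eq_cpy X Y h
      exact h12 a ha b hb h1 (h1 ▸ h2)
    · intro h
      obtain ⟨h1, h2⟩ := inl_eq_cpy X Y h.symm
      exact h12 b hb a ha h1 (h1 ▸ h2)
    · intro h
      exact hab (h22 a ha b hb (cpy_inj X Y h))
  · apply Finset.card_image_of_injective
    intro a b h
    simp only [Prod.mk.injEq] at h
    exact Prod.ext (Sum.inl_injective h.1) (cpy_inj X Y h.2)
  · rintro v hv ⟨e, he, h⟩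
    obtain ⟨a, ha, rfl⟩ := Finset.mem_image.1 he
    rcases h with h | h
    · exact (hU v hv a ha).1 (Sum.inl_injective h).symm
    · exact (hU v hv a ha).2 (inl_eq_cpy X Y h).1.symm

lemma list_split {V : Type*} (p : V → Prop) (l : List V) (t : V) (ht : t ∈ l) (hp : p t) :
    ∃ m c l', l = m ++ c :: l' ∧ (∀ z ∈ m, ¬ p z) ∧ p c := by
  classical
  induction l with
  | nil => simp at ht
  | cons a l ih =>
    by_cases ha : p a
    · exact ⟨[], a, l, rfl, by simp, ha⟩
    · have : t ∈ l := by
        rcases List.mem_cons.1 ht with rfl | h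
        · exact (ha hp).elim
        · exact h
      obtain ⟨m, c, l', rfl, h1, h2⟩ := ih this
      refine ⟨a :: m, c, l', rfl, ?_, h2⟩
      intro z hz
      rcases List.mem_cons.1 hz with rfl | h
      · exact ha
      · exact h1 z h

lemma norm_of_paths {V : Type*} [Fintype V] [DecidableEq V]
    (A : V → V → Prop) (X Y R : Finset V) (hR : R ⊆ X ∩ Y) (k : ℕ)
    (P : Fin k → List V)
    (hP : ∀ i, ∃ x y, x ∈ X ∧ y ∈ Y ∧ x ≠ y ∧ IsPathFT A x y (P i))
    (hdis : ∀ i j, i ≠ j → ∀ v, v ∈ P i → v ∉ P j)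
    (hRP : ∀ i, ∀ v ∈ R, v ∉ P i) :
    ∃ T, NormM A X Y R T ∧ T.card = k + (Finset.univ \ (X ∪ Y)).card := by
  classical
  have key : ∀ i, ∃ x m t, x ∈ X ∪ Y ∧ t ∈ X ∪ Y ∧ (∀ z ∈ m, z ∉ X ∪ Y) ∧
      (x :: (m ++ [t])).Nodup ∧ (x :: (m ++ [t])).IsChain A ∧
      ∀ v ∈ x :: (m ++ [t]), v ∈ P i := by
    intro i
    obtain ⟨x, y, hx, hy, hxy, ⟨hne, hnd, hch⟩, hhead, hlast⟩ := hP i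
    have hch : (P i).IsChain A := hch
    generalize P i = p at *
    rcases p with _ | ⟨a, l⟩
    · simp at hne
    simp only [List.head?_cons, Option.some.injEq] at hhead
    subst hhead
    have hyl : y ∈ l := by
      have := List.mem_of_getLast? hlast
      rcases List.mem_cons.1 this with h | h
      · exact (hxy h.symm).elim
      · exact h
    obtain ⟨m, c, l', rfl, h1, h2⟩ := list_split (· ∈ X ∪ Y) l y hyl
      (Finset.mem_union_right _ hy)
    have hpre : (a :: (m ++ [c])) <+: (a :: (m ++ c :: l')) := ⟨l', by simp⟩
    exact ⟨a, m, c, Finset.mem_union_left _ hx, h2, h1, hnd.sublist hpre.sublist,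
      hch.prefix hpre, fun v hv => hpre.subset hv⟩
  choose x m t hx ht hm hnd hch hsub using key
  set Q : Fin k → List V := fun i => x i :: (m i ++ [t i]) with hQ
  have hQdis : ∀ i j v, v ∈ Q i → v ∈ Q j → i = j := by
    intro i j v h1 h2
    by_contra hne
    exact hdis i j hne v (hsub i v h1) (hsub j v h2)
  have hxQ : ∀ i, x i ∈ Q i := fun i => by simp [hQ]
  set Z := Finset.univ \ (X ∪ Y) with hZ
  have hZm : ∀ v, v ∈ Z ↔ v ∉ X ∪ Y := by intro v; simp [hZ]
  set S : Finset V := Finset.univ.image x ∪ Z with hS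
  have hScard : S.card = k + Z.card := by
    rw [hS, Finset.card_union_of_disjoint, Finset.card_image_of_injective]
    · simp
    · intro i j h
      exact hQdis i j (x i) (hxQ i) (h ▸ hxQ j)
    · rw [Finset.disjoint_left]
      intro v hv hv'
      obtain ⟨i, -, rfl⟩ := Finset.mem_image.1 hv
      exact (hZm _).1 hv' (hx i)
  have hsucc : ∀ v : V, ∃ w, v ∈ S →
      (∃ i n, (Q i)[n]? = some v ∧ (Q i)[n+1]? = some w) ∨
      (v = w ∧ v ∈ Z ∧ ∀ i, v ∉ Q i) := by
    intro v
    by_cases hv : v ∈ S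
    swap
    · exact ⟨v, fun h => (hv h).elim⟩
    by_cases hvQ : ∃ i, v ∈ Q i
    · obtain ⟨i, hi⟩ := hvQ
      have hvm : v ∈ x i :: m i := by
        rcases Finset.mem_union.1 hv with h | h
        · obtain ⟨j, -, rfl⟩ := Finset.mem_image.1 h
          rw [hQdis i j _ hi (hxQ j)]
          simp
        · have h' := (hZm v).1 h
          have : v ≠ t i := fun h2 => h' (h2 ▸ ht i)
          simpa [hQ, this] using hi
      obtain ⟨n, hn, hnv⟩ := List.getElem_of_mem hvm
      have hlen : n + 1 < (Q i).length := by
        simp [hQ] at hn ⊢; omega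
      refine ⟨(Q i)[n+1], fun _ => Or.inl ⟨i, n, ?_, ?_⟩⟩
      · have : Q i = (x i :: m i) ++ [t i] := by simp [hQ]
        rw [this, List.getElem?_append_left hn, List.getElem?_eq_getElem hn, hnv]
      · exact List.getElem?_eq_getElem hlen
    · push Not at hvQ
      refine ⟨v, fun _ => Or.inr ⟨rfl, ?_, hvQ⟩⟩
      rcases Finset.mem_union.1 hv with h | h
      · obtain ⟨j, -, rfl⟩ := Finset.mem_image.1 h
        exact (hvQ j (hxQ j)).elim
      · exact h
  choose g hg using hsucc
  have hinj : ∀ (i : Fin k) (n n' : ℕ) (v : V), (Q i)[n]? = some v → (Q i)[n']? = some v → n = n' := by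
    intro i n n' v h1 h2
    have hl : n < (Q i).length := (List.getElem?_eq_some_iff.1 h1).1
    exact (List.getElem?_inj hl (hnd i)).1 (h1.trans h2.symm)
  refine ⟨S.image (fun v => (v, g v)), ⟨?_, ?_, ?_, ?_, ?_⟩, ?_⟩
  · intro e he
    obtain ⟨v, hv, rfl⟩ := Finset.mem_image.1 he
    rcases hg v hv with ⟨i, n, h1, h2⟩ | ⟨h1, h2, -⟩
    · left
      obtain ⟨l1, e1⟩ := List.getElem?_eq_some_iff.1 h1
      obtain ⟨l2, e2⟩ := List.getElem?_eq_some_iff.1 h2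
      have := List.isChain_iff_getElem.1 (hch i) n l2
      simp only [hQ] at e1 e2
      simpa only [e1, e2] using this
    · exact Or.inr ⟨h1, (hZm v).1 h2⟩
  · intro e he f hf h
    obtain ⟨v, hv, rfl⟩ := Finset.mem_image.1 he
    obtain ⟨w, hw, rfl⟩ := Finset.mem_image.1 hf
    simp only at h
    rw [h]
  · intro e he f hf h
    obtain ⟨v, hv, rfl⟩ := Finset.mem_image.1 he
    obtain ⟨w, hw, rfl⟩ := Finset.mem_image.1 hf
    simp only at h
    suffices v = w by rw [this]
    rcases hg v hv with ⟨i, n, h1, h2⟩ | ⟨h1, h2, h3⟩ <;>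
    rcases hg w hw with ⟨i', n', h1', h2'⟩ | ⟨h1', h2', h3'⟩
    · rw [← h] at h2'
      have hii := hQdis i i' _ (List.mem_of_getElem? h2) (List.mem_of_getElem? h2')
      subst hii
      have := hinj i _ _ _ h2 h2'
      have hnn : n = n' := by omega
      subst hnn
      rw [h1] at h1'
      exact Option.some.inj h1'
    · rw [h, ← h1'] at h2
      exact (h3' i (List.mem_of_getElem? h2)).elim
    · rw [← h, ← h1] at h2'
      exact (h3 i' (List.mem_of_getElem? h2')).elim
    · exact h1.trans (h.trans h1'.symm)
  · intro e he f hf h hmem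
    obtain ⟨v, hv, rfl⟩ := Finset.mem_image.1 he
    obtain ⟨w, hw, rfl⟩ := Finset.mem_image.1 hf
    simp only at h hmem
    have hvx : ∃ i, v = x i := by
      rcases Finset.mem_union.1 hv with h' | h'
      · obtain ⟨j, -, rfl⟩ := Finset.mem_image.1 h'
        exact ⟨j, rfl⟩
      · exact ((hZm v).1 h' hmem).elim
    obtain ⟨j, rfl⟩ := hvx
    rcases hg w hw with ⟨i', n', h1', h2'⟩ | ⟨h1', h2', h3'⟩
    · rw [← h] at h2'
      have hii := hQdis i' j _ (List.mem_of_getElem? h2') (hxQ j)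
      subst hii
      have := hinj i' (n'+1) 0 _ h2' (by simp [hQ])
      omega
    · rw [h, ← h1'] at hmem
      exact (hZm w).1 h2' hmem
  · intro v hv e he
    obtain ⟨w, hw, rfl⟩ := Finset.mem_image.1 he
    have hvm : v ∈ X ∪ Y := Finset.mem_union_left _ (Finset.mem_inter.1 (hR hv)).1
    have hvQ : ∀ i, v ∉ Q i := fun i h => hRP i v hv (hsub i v h)
    constructor
    · rintro rfl
      rcases Finset.mem_union.1 hw with h' | h'
      · obtain ⟨j, -, h'⟩ := Finset.mem_image.1 h'
        exact hvQ j (h' ▸ hxQ j)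
      · exact (hZm _).1 h' hvm
    · rintro rfl
      rcases hg w hw with ⟨i', n', h1', h2'⟩ | ⟨h1', h2', h3'⟩
      · exact hvQ i' (List.mem_of_getElem? h2')
      · simp only at hvm
        rw [← h1'] at hvm
        exact (hZm w).1 h2' hvm
  · rw [Finset.card_image_of_injective, hScard]
    intro a b h
    exact (Prod.mk.inj h).1

open Relation in
lemma no_cycle {V : Type*} (H : V → V → Prop) (hinj : ∀ a b c, H a c → H b c → a = b)
    (s w : V) (hs : ∀ a, ¬ H a s) (h : ReflTransGen H s w) : ¬ TransGen H w w := by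
  induction h with
  | refl =>
    intro h
    obtain ⟨b, -, hb⟩ := TransGen.tail'_iff.1 h
    exact hs b hb
  | tail h1 h2 ih =>
    intro h
    obtain ⟨b, hb, hb'⟩ := TransGen.tail'_iff.1 h
    rw [hinj _ _ _ hb' h2] at hb
    exact ih (TransGen.head' h2 hb)

open Relation in
lemma path_of_reach {V : Type*} (H : V → V → Prop) (hinj : ∀ a b c, H a c → H b c → a = b)
    (s w : V) (hs : ∀ a, ¬ H a s) (h : ReflTransGen H s w) :
    ∃ p : List V, p.Nodup ∧ p.IsChain H ∧ p.head? = some s ∧ p.getLast? = some w ∧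
      ∀ v ∈ p, ReflTransGen H s v ∧ ReflTransGen H v w := by
  induction h with
  | refl => exact ⟨[s], by simp, by simp, rfl, rfl, by simp [ReflTransGen.refl]⟩
  | @tail b c h1 h2 ih =>
    obtain ⟨p, hnd, hch, hh, hl, hr⟩ := ih
    have hc : ReflTransGen H s c := h1.tail h2
    refine ⟨p ++ [c], ?_, ?_, ?_, ?_, ?_⟩
    · rw [List.nodup_append]
      refine ⟨hnd, by simp, ?_⟩
      intro a ha b' hb' hab
      simp only [List.mem_singleton] at hb'
      subst hb' hab
      exact no_cycle H hinj s a hs hc (TransGen.tail' (hr a ha).2 h2)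
    · rw [List.isChain_append]
      refine ⟨hch, by simp, ?_⟩
      intro a ha d hd
      rw [hl] at ha
      simp at ha hd
      subst ha hd
      exact h2
    · rw [List.head?_append, hh]; rfl
    · simp
    · intro v hv
      rcases List.mem_append.1 hv with hv | hv
      · exact ⟨(hr v hv).1, (hr v hv).2.tail h2⟩
      · simp only [List.mem_singleton] at hv
        subst hv
        exact ⟨hc, ReflTransGen.refl⟩

open Relation in
lemma exists_terminal {V : Type*} [Finite V] (H : V → V → Prop)
    (hinj : ∀ a b c, H a c → H b c → a = b)
    (s : V) (hs : ∀ a, ¬ H a s) :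
    ∃ t, ReflTransGen H s t ∧ ∀ w, ¬ H t w := by
  classical
  let W := {v // ReflTransGen H s v}
  let r : W → W → Prop := fun a b => TransGen H b.1 a.1
  haveI : IsTrans W r := ⟨fun a b c h1 h2 => TransGen.trans h2 h1⟩
  haveI : Std.Irrefl r := ⟨fun a => no_cycle H hinj s a.1 hs a.2⟩
  have hwf : WellFounded r := Finite.wellFounded_of_trans_of_irrefl r
  obtain ⟨t, -, ht⟩ := hwf.has_min Set.univ ⟨⟨s, ReflTransGen.refl⟩, trivial⟩
  refine ⟨t.1, t.2, fun w hw => ht ⟨w, t.2.tail hw⟩ trivial (TransGen.single hw)⟩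

open Relation in
lemma start_unique {V : Type*} (H : V → V → Prop)
    (hinj : ∀ a b c, H a c → H b c → a = b)
    (s s' v : V) (hs : ∀ a, ¬ H a s) (hs' : ∀ a, ¬ H a s')
    (h : ReflTransGen H s v) (h' : ReflTransGen H s' v) : s = s' := by
  induction h generalizing s' with
  | refl =>
    rcases ReflTransGen.cases_tail h' with h | ⟨c, -, hc⟩
    · exact h
    · exact (hs c hc).elim
  | @tail b c h1 h2 ih =>
    rcases ReflTransGen.cases_tail h' with h | ⟨d, hd, hd'⟩
    · subst h
      exact (hs' _ h2).elim
    · rw [hinj _ _ _ hd' h2] at hd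
      exact ih s' hs' hd

open Relation in
lemma paths_of_norm {V : Type*} [Fintype V] [DecidableEq V]
    (A : V → V → Prop) (harc : ∀ a b, A a b → a ≠ b)
    (X Y : Finset V)
    (hX : ∀ a b, A a b → b ∈ X → b ∈ Y)
    (hY : ∀ a b, A a b → a ∈ Y → a ∈ X)
    (k : ℕ) (U : Finset V) (hU : U ⊆ X ∩ Y) (T : Finset (V × V)) (hT : NormM A X Y U T)
    (hcard : T.card = k + (Finset.univ \ (X ∪ Y)).card) :
    ∃ P : Fin k → List V,
        (∀ i, ∃ x y, x ∈ X ∧ y ∈ Y ∧ x ≠ y ∧ IsPathFT A x y (P i)) ∧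
        (∀ i j, i ≠ j → ∀ v, v ∈ P i → v ∉ P j) ∧
        (∀ i, ∀ v ∈ U, v ∉ P i) := by
  classical
  obtain ⟨hA, h11, h22, h12, hUT⟩ := hT
  set Z := Finset.univ \ (X ∪ Y) with hZ
  have hZm : ∀ v, v ∈ Z ↔ v ∉ X ∪ Y := by intro v; simp [hZ]
  let H : V → V → Prop := fun u v => (u, v) ∈ T ∧ u ≠ v
  have hHA : ∀ u v, H u v → A u v := by
    rintro u v ⟨h, hne⟩
    rcases hA _ h with h | h
    · exact h
    · exact (hne h.1).elim
  have hinj : ∀ a b c, H a c → H b c → a = b := by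
    intro a b c h1 h2
    exact (Prod.mk.inj (h22 _ h1.1 _ h2.1 rfl)).1
  set D := T.image Prod.fst with hD
  have hDcard : D.card = T.card := by
    apply Finset.card_image_of_injOn
    intro a ha b hb h
    exact h11 a ha b hb h
  set S := D.filter (· ∈ X ∪ Y) with hS
  have hScard : S.card = k + (Z \ D).card := by
    have e1 : S.card + (D.filter (¬ · ∈ X ∪ Y)).card = D.card :=
      Finset.card_filter_add_card_filter_not _
    have e2 : D.filter (¬ · ∈ X ∪ Y) = Z ∩ D := by
      ext v; simp only [Finset.mem_filter, Finset.mem_inter, hZm]; tauto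
    have e3 := Finset.card_sdiff_add_card_inter Z D
    rw [e2] at e1
    omega
  have hSin : ∀ s ∈ S, ∀ a, ¬ H a s := by
    intro s hs a ha
    obtain ⟨h1, h2⟩ := Finset.mem_filter.1 hs
    obtain ⟨e, he, rfl⟩ := Finset.mem_image.1 h1
    exact h12 e he _ ha.1 rfl h2
  have hSout : ∀ s ∈ S, ∃ w, H s w := by
    intro s hs
    obtain ⟨h1, h2⟩ := Finset.mem_filter.1 hs
    obtain ⟨e, he, rfl⟩ := Finset.mem_image.1 h1
    rcases hA e he with h | h
    · exact ⟨e.2, he, harc _ _ h⟩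
    · exact (h.2 h2).elim
  have hex : ∀ s, ∃ t, s ∈ S → ReflTransGen H s t ∧ ∀ w, ¬ H t w := by
    intro s
    by_cases hs : s ∈ S
    · obtain ⟨t, ht⟩ := exists_terminal H hinj s (hSin s hs)
      exact ⟨t, fun _ => ht⟩
    · exact ⟨s, fun h => (hs h).elim⟩
  choose t ht using hex
  have htin : ∀ s ∈ S, s ≠ t s ∧ ∃ a, H a (t s) := by
    intro s hs
    obtain ⟨w, hw⟩ := hSout s hs
    have hne : s ≠ t s := fun h => (ht s hs).2 w (h ▸ hw)
    refine ⟨hne, ?_⟩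
    rcases ReflTransGen.cases_tail (ht s hs).1 with h | ⟨c, -, hc⟩
    · exact (hne h.symm).elim
    · exact ⟨c, hc⟩
  have hgood : k ≤ (S.filter (fun s => t s ∈ X ∪ Y)).card := by
    have e1 : (S.filter (fun s => t s ∈ X ∪ Y)).card +
      (S.filter (fun s => ¬ t s ∈ X ∪ Y)).card = S.card :=
      Finset.card_filter_add_card_filter_not _
    have e2 : (S.filter (fun s => ¬ t s ∈ X ∪ Y)).card ≤ (Z \ D).card := by
      apply Finset.card_le_card_of_injOn t
      · intro s hs
        have hs := Finset.mem_coe.1 hs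
        obtain ⟨hs1, hs2⟩ := Finset.mem_filter.1 hs
        apply Finset.mem_coe.2
        rw [Finset.mem_sdiff, hZm]
        refine ⟨hs2, fun hd => ?_⟩
        obtain ⟨e, he, hee⟩ := Finset.mem_image.1 hd
        by_cases hee2 : t s = e.2
        · obtain ⟨-, a, ha⟩ := htin s hs1
          have := h22 _ ha.1 e he hee2
          exact ha.2 (by rw [← hee, ← this])
        · refine (ht s hs1).2 e.2 ⟨?_, hee2⟩
          rw [← hee]; exact he
      · intro s hs s' hs' h
        have hs := (Finset.mem_filter.1 (Finset.mem_coe.1 hs)).1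
        have hs' := (Finset.mem_filter.1 (Finset.mem_coe.1 hs')).1
        exact start_unique H hinj s s' (t s) (hSin s hs) (hSin s' hs') (ht s hs).1
          (by rw [h]; exact (ht s' hs').1)
    omega
  obtain ⟨B, hB, hBk⟩ := Finset.exists_subset_card_eq hgood
  let φ : Fin k ≃ B := (B.equivFinOfCardEq hBk).symm
  have hφ : ∀ i, (φ i).1 ∈ S ∧ t (φ i).1 ∈ X ∪ Y := fun i =>
    Finset.mem_filter.1 (hB (φ i).2)
  have hpath := fun i => path_of_reach H hinj (φ i).1 (t (φ i).1) (hSin _ (hφ i).1)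
    (ht _ (hφ i).1).1
  choose P hnd hch hh hl hr using hpath
  refine ⟨P, ?_, ?_, ?_⟩
  · intro i
    obtain ⟨hs, hts⟩ := hφ i
    obtain ⟨w, hw⟩ := hSout _ hs
    obtain ⟨hne, a, ha⟩ := htin _ hs
    refine ⟨_, _, ?_, ?_, hne, ⟨?_, hnd i, ?_⟩, hh i, hl i⟩
    · rcases Finset.mem_union.1 (Finset.mem_filter.1 hs).2 with h | h
      · exact h
      · exact hY _ _ (hHA _ _ hw) h
    · rcases Finset.mem_union.1 hts with h | h
      · exact hX _ _ (hHA _ _ ha) h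
      · exact h
    · intro h
      have := hh i
      rw [h] at this
      simp at this
    · exact (hch i).imp (fun a b h => hHA a b h)
  · intro i j hij v hi hj
    apply hij
    apply φ.injective
    apply Subtype.ext
    exact start_unique H hinj _ _ v (hSin _ (hφ i).1) (hSin _ (hφ j).1) (hr i v hi).1
      (hr j v hj).1
  · intro i v hv hvi
    rcases ReflTransGen.cases_tail (hr i v hvi).1 with h | ⟨c, -, hc⟩
    · obtain ⟨w, hw⟩ := hSout _ (hφ i).1
      rw [← h] at hw
      exact (hUT v hv _ hw.1).1 rfl
    · exact (hUT v hv _ hc.1).2 rfl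

theorem stmt5 {V : Type*} [Fintype V] [DecidableEq V]
    (A : V → V → Prop) (harc : ∀ a b, A a b → a ≠ b)
    (X Y : Finset V)
    (hX : ∀ a b, A a b → b ∈ X → b ∈ Y)
    (hY : ∀ a b, A a b → a ∈ Y → a ∈ X)
    (k r : ℕ) :
    (∃ R : Finset V, R ⊆ X ∩ Y ∧ R.card = r ∧
      ∃ P : Fin k → List V,
        (∀ i, ∃ x y, x ∈ X ∧ y ∈ Y ∧ x ≠ y ∧ IsPathFT A x y (P i)) ∧
        (∀ i j, i ≠ j → ∀ v, v ∈ P i → v ∉ P j) ∧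
        (∀ i, ∀ v ∈ R, v ∉ P i)) ↔
    (∃ M : Finset ((V ⊕ V) × (V ⊕ V)), IsMatching (auxAdj A X Y) M ∧
      M.card = k + (Finset.univ \ (X ∪ Y)).card ∧
      ∃ U : Finset V, U ⊆ X ∩ Y ∧ U.card = r ∧
        ∀ v ∈ U, ¬ SaturatedBy M (Sum.inl v)) := by
  constructor
  · rintro ⟨R, hR, hRr, P, h1, h2, h3⟩
    obtain ⟨T, hT, hTc⟩ := norm_of_paths A X Y R hR k P h1 h2 h3
    obtain ⟨M, hM, hMc, hs⟩ := matching_of_norm A harc X Y R T hT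
    exact ⟨M, hM, hMc.trans hTc, R, hR, hRr, hs⟩
  · rintro ⟨M, hM, hMc, U, hU, hUr, hs⟩
    obtain ⟨T, hT, hTc⟩ := norm_of_matching A harc X Y U hU M hM hs
    exact ⟨U, hU, hUr, paths_of_norm A harc X Y hX hY k U hU T hT (hTc.trans hMc)⟩
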